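/- Let g:[0,∞)→[0,∞] be a nondecreasing function, ρ > 0, φ_ρ(λ) = inf_{y>0} { g(y) + λ/y^ρ } for λ ≥ 0, and λ* = inf_{y>1} { (y^ρ/(y^ρ-1)) g(y) }. Then: (i) for every c ≥ 0, φ_ρ(c) ≥ c if and only if c ≤ λ*; (ii) if λ* < ∞ then φ_ρ(λ*) = λ*. -/

import Mathlib

open MeasureTheory ProbabilityTheory Filter Set Topology
open scoped ENNReal

/-- `-log p`, valued in `[0,∞]`, with the convention `-log 0 = ∞`. -/
noncomputable def negLog (p : ℝ≥0∞) : ℝ≥0∞ :=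
  if p = 0 then ⊤ else ENNReal.ofReal (-Real.log p.toReal)

/-- `H` is positive, continuous and strictly decreasing on `(0,∞)`, and regularly
varying at `0` with index `-ρ < 0`. -/
structure IsRVatZero (H : ℝ → ℝ) (ρ : ℝ) : Prop where
  rho_pos : 0 < ρ
  pos : ∀ x ∈ Set.Ioi (0:ℝ), 0 < H x
  contOn : ContinuousOn H (Set.Ioi 0)
  anti : StrictAntiOn H (Set.Ioi 0)
  rv : ∀ y ∈ Set.Ioi (0:ℝ),
    Filter.Tendsto (fun x => H (y * x) / H x) (nhdsWithin 0 (Set.Ioi 0)) (nhds (y ^ (-ρ)))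

/-- `X` is an `IED^ρ_H(l)`-random variable with respect to `μ`:
`lim_{ε→0⁺} (-log P(X < ε))/H(ε) = l`. -/
def IsIED {Ω : Type*} [MeasurableSpace Ω] (μ : Measure Ω) (X : Ω → ℝ)
    (H : ℝ → ℝ) (l : ℝ≥0∞) : Prop :=
  Filter.Tendsto (fun ε => negLog (μ {ω | X ω < ε}) / ENNReal.ofReal (H ε))
    (nhdsWithin 0 (Set.Ioi 0)) (nhds l)

/-- `g` is the `(ρ,H)`-local dependence measure of the pair `(A,B)`:
`g(y) = lim_{ε→0⁺} (-log P(εAy + B < ε))/H(ε)` for every `y ≥ 0`. -/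
def IsLDM {Ω : Type*} [MeasurableSpace Ω] (μ : Measure Ω) (A B : Ω → ℝ)
    (H : ℝ → ℝ) (g : ℝ → ℝ≥0∞) : Prop :=
  ∀ y : ℝ, 0 ≤ y →
    Filter.Tendsto (fun ε => negLog (μ {ω | ε * A ω * y + B ω < ε}) / ENNReal.ofReal (H ε))
      (nhdsWithin 0 (Set.Ioi 0)) (nhds (g y))

/-- The Legendre-type transform `φ_ρ(λ) = inf_{y>0} { g(y) + λ/y^ρ }`. -/
noncomputable def phi (g : ℝ → ℝ≥0∞) (ρ : ℝ) (l : ℝ≥0∞) : ℝ≥0∞ :=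
  ⨅ y ∈ Set.Ioi (0:ℝ), (g y + l / ENNReal.ofReal (y ^ ρ))

/-- `λ* = inf_{y>1} { (y^ρ/(y^ρ-1)) g(y) }`. -/
noncomputable def lambdaStar (g : ℝ → ℝ≥0∞) (ρ : ℝ) : ℝ≥0∞ :=
  ⨅ y ∈ Set.Ioi (1:ℝ), ENNReal.ofReal (y ^ ρ / (y ^ ρ - 1)) * g y

/-!
With `p = y ^ ρ` for `y > 1`, the coefficient `q = y ^ ρ / (y ^ ρ - 1)` in `lambdaStar` is the
Hölder conjugate of `p`, so `c = c / q + c / p`. Cancelling `c / p` shows that `c ≤ g y + c / p`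
means `c ≤ q * g y`; for `y ≤ 1` the first inequality is automatic because `p ≤ 1`. Moreover
`q * g y` is a fixed point of the increasing map `c ↦ g y + c / p`, so `λ* ≤ q * g y` implies
`φ_ρ(λ*) ≤ q * g y`.
-/

section HolderConjugate

variable {p q c x : ℝ≥0∞}

theorem div_add_div_of_holderConjugate (h : p.HolderConjugate q) (c : ℝ≥0∞) :
    c / q + c / p = c := by
  rw [div_eq_mul_inv, div_eq_mul_inv, ← mul_add, add_comm,
    ENNReal.HolderConjugate.inv_add_inv_eq_one, mul_one]

theorem le_add_div_of_le_mul_of_holderConjugate (h : p.HolderConjugate q) (hcx : c ≤ q * x) :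
    c ≤ x + c / p :=
  calc
    c = c / q + c / p := (div_add_div_of_holderConjugate h c).symm
    _ ≤ x + c / p := by gcongr; exact ENNReal.div_le_of_le_mul' hcx

theorem le_add_div_iff_le_mul_of_holderConjugate (h : p.HolderConjugate q) (hq : q ≠ ⊤)
    (hc : c ≠ ⊤) :
    c ≤ x + c / p ↔ c ≤ q * x := by
  refine ⟨fun hcx => ?_, le_add_div_of_le_mul_of_holderConjugate h⟩
  have hcp : c / p ≠ ⊤ := ENNReal.div_ne_top hc (ENNReal.HolderConjugate.ne_zero p q)
  have hcq : c / q ≤ x := by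
    rw [← ENNReal.add_le_add_iff_right hcp, div_add_div_of_holderConjugate h]
    exact hcx
  exact (ENNReal.div_le_iff' (ENNReal.HolderConjugate.ne_zero q p) hq).1 hcq

theorem add_mul_div_of_holderConjugate (h : p.HolderConjugate q) (x : ℝ≥0∞) :
    x + q * x / p = q * x :=
  calc
    x + q * x / p = (1 + q / p) * x := by rw [add_mul, one_mul, ENNReal.mul_div_right_comm]
    _ = q * x := by
      rw [ENNReal.HolderConjugate.div_conj_eq_sub_one,
        add_tsub_cancel_of_le (ENNReal.HolderConjugate.one_le q p)]

end HolderConjugate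

theorem le_add_div_of_le_one {p : ℝ≥0∞} (hp : p ≤ 1) (c x : ℝ≥0∞) : c ≤ x + c / p :=
  calc
    c = c / 1 := (div_one c).symm
    _ ≤ c / p := ENNReal.div_le_div_left hp c
    _ ≤ x + c / p := le_add_self

theorem holderConjugate_ofReal_rpow {ρ y : ℝ} (hρ : 0 < ρ) (hy : 1 < y) :
    (ENNReal.ofReal (y ^ ρ)).HolderConjugate (ENNReal.ofReal (y ^ ρ / (y ^ ρ - 1))) :=
  (Real.HolderConjugate.conjExponent (Real.one_lt_rpow hy hρ)).ennrealOfReal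

section Transform

variable {g : ℝ → ℝ≥0∞} {ρ : ℝ} {c : ℝ≥0∞}

theorem phi_le {y : ℝ} (hy : 0 < y) : phi g ρ c ≤ g y + c / ENNReal.ofReal (y ^ ρ) :=
  iInf₂_le y hy

theorem le_phi_self_iff (hρ : 0 < ρ) :
    c ≤ phi g ρ c ↔ ∀ y, 1 < y → c ≤ g y + c / ENNReal.ofReal (y ^ ρ) := by
  refine ⟨fun h y hy => h.trans (phi_le (zero_lt_one.trans hy)), fun h => le_iInf₂ fun y hy => ?_⟩
  rcases lt_or_ge 1 y with hy_gt | hy_le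
  · exact h y hy_gt
  · exact le_add_div_of_le_one
      (ENNReal.ofReal_le_one.2 (Real.rpow_le_one (le_of_lt hy) hy_le hρ.le)) c (g y)

theorem lambdaStar_le {y : ℝ} (hy : 1 < y) :
    lambdaStar g ρ ≤ ENNReal.ofReal (y ^ ρ / (y ^ ρ - 1)) * g y :=
  iInf₂_le y hy

theorem le_phi_self_iff_le_lambdaStar (hρ : 0 < ρ) (hc : c ≠ ⊤) :
    c ≤ phi g ρ c ↔ c ≤ lambdaStar g ρ := by
  rw [le_phi_self_iff hρ, lambdaStar, le_iInf₂_iff]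
  exact forall₂_congr fun y hy =>
    le_add_div_iff_le_mul_of_holderConjugate (holderConjugate_ofReal_rpow hρ hy)
      ENNReal.ofReal_ne_top hc

theorem lambdaStar_le_phi_lambdaStar (hρ : 0 < ρ) :
    lambdaStar g ρ ≤ phi g ρ (lambdaStar g ρ) :=
  (le_phi_self_iff hρ).2 fun _ hy =>
    le_add_div_of_le_mul_of_holderConjugate (holderConjugate_ofReal_rpow hρ hy) (lambdaStar_le hy)

theorem phi_lambdaStar_le_lambdaStar (hρ : 0 < ρ) :
    phi g ρ (lambdaStar g ρ) ≤ lambdaStar g ρ := by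
  refine le_iInf₂ fun y (hy : 1 < y) => ?_
  set p := ENNReal.ofReal (y ^ ρ)
  set q := ENNReal.ofReal (y ^ ρ / (y ^ ρ - 1))
  calc
    phi g ρ (lambdaStar g ρ) ≤ g y + lambdaStar g ρ / p := phi_le (zero_lt_one.trans hy)
    _ ≤ g y + q * g y / p := by gcongr; exact lambdaStar_le hy
    _ = q * g y := add_mul_div_of_holderConjugate (holderConjugate_ofReal_rpow hρ hy) (g y)

end Transform

theorem stmt5_general (g : ℝ → ℝ≥0∞) (ρ : ℝ) (hρ : 0 < ρ) :
    (∀ c : ℝ≥0∞, c ≠ ⊤ → (c ≤ phi g ρ c ↔ c ≤ lambdaStar g ρ))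
    ∧ phi g ρ (lambdaStar g ρ) = lambdaStar g ρ :=
  ⟨fun _ => le_phi_self_iff_le_lambdaStar hρ,
    (phi_lambdaStar_le_lambdaStar hρ).antisymm (lambdaStar_le_phi_lambdaStar hρ)⟩

/-- Lemma `pro:lambdastar`.
For nondecreasing `g : [0,∞) → [0,∞]` and `ρ > 0`:
(i) for every `c ≥ 0`, `φ_ρ(c) ≥ c` if and only if `c ≤ λ*`;
(ii) if `λ* < ∞` then `φ_ρ(λ*) = λ*`. -/
theorem stmt5 (g : ℝ → ℝ≥0∞) (ρ : ℝ) (hρ : 0 < ρ) (hmono : MonotoneOn g (Set.Ici 0)) :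
    (∀ c : ℝ≥0∞, c ≠ ⊤ → (c ≤ phi g ρ c ↔ c ≤ lambdaStar g ρ))
    ∧ (lambdaStar g ρ ≠ ⊤ → phi g ρ (lambdaStar g ρ) = lambdaStar g ρ) :=
  (stmt5_general g ρ hρ).imp_right fun h _ => h
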